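/- Let m > 1 be an integer and k ∈ ℤ∖mℤ. Then the Fricke function f_{(k/m, 0)} is holomorphic on ℍ, satisfies f_{(k/m,0)}(γτ) = f_{(k/m,0)}(τ) for every γ ∈ Γ^1(m) and τ ∈ ℍ, and all of its Fourier coefficients (in its expansion in powers of q^{1/m}, q = e^{2πiτ}) are rational numbers. -/

import Mathlib

open Complex UpperHalfPlane Matrix MatrixGroups CongruenceSubgroup
open scoped UpperHalfPlane Manifold Real

noncomputable section

/-- `N·τ` as a point of the upper half-plane (junk value `τ` if `N = 0`). -/
def hsmul (N : ℕ) (τ : UpperHalfPlane) : UpperHalfPlane :=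
  if hN : 0 < N then
    ⟨(N : ℂ) * τ, by
      have h0 : (0 : ℝ) < (N : ℝ) := by exact_mod_cast hN
      simpa [Complex.mul_im] using mul_pos h0 τ.2⟩
  else τ

/-- The Siegel function `g_r(τ)` given by its infinite product expansion. -/
def siegel (r : ℚ × ℚ) (τ : ℍ) : ℂ :=
  -Complex.exp ((Real.pi : ℂ) * Complex.I * (((r.1 : ℂ) ^ 2 - (r.1 : ℂ) + 1 / 6) * τ)) *
    Complex.exp ((Real.pi : ℂ) * Complex.I * (r.2 : ℂ) * ((r.1 : ℂ) - 1)) *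
    (1 - Complex.exp (2 * (Real.pi : ℂ) * Complex.I * ((r.1 : ℂ) * τ + (r.2 : ℂ)))) *
    ∏' n : ℕ,
      ((1 - Complex.exp (2 * (Real.pi : ℂ) * Complex.I *
          (((n : ℂ) + 1 + (r.1 : ℂ)) * τ + (r.2 : ℂ)))) *
       (1 - Complex.exp (2 * (Real.pi : ℂ) * Complex.I *
          (((n : ℂ) + 1 - (r.1 : ℂ)) * τ - (r.2 : ℂ)))))

/-- The lattice point `ω = m·τ + n` attached to a pair `(m,n) ∈ ℤ²`. -/
def lat (τ : ℍ) (p : ℤ × ℤ) : ℂ := (p.1 : ℂ) * τ + (p.2 : ℂ)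

/-- `g₂(τ) = 60 ∑_{ω ∈ L_τ ∖ {0}} ω⁻⁴`. -/
def g2C (τ : ℍ) : ℂ := 60 * ∑' p : {p : ℤ × ℤ // p ≠ 0}, ((lat τ p.1) ^ 4)⁻¹

/-- `g₃(τ) = 140 ∑_{ω ∈ L_τ ∖ {0}} ω⁻⁶`. -/
def g3C (τ : ℍ) : ℂ := 140 * ∑' p : {p : ℤ × ℤ // p ≠ 0}, ((lat τ p.1) ^ 6)⁻¹

/-- The discriminant `Δ(τ) = g₂(τ)³ - 27 g₃(τ)²`. -/
def discC (τ : ℍ) : ℂ := g2C τ ^ 3 - 27 * g3C τ ^ 2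

/-- The Weierstrass `℘`-function relative to the lattice `L_τ = ℤτ + ℤ`. -/
def wpC (z : ℂ) (τ : ℍ) : ℂ :=
  (z ^ 2)⁻¹ + ∑' p : {p : ℤ × ℤ // p ≠ 0}, (((z - lat τ p.1) ^ 2)⁻¹ - ((lat τ p.1) ^ 2)⁻¹)

/-- The Fricke function `f_r(τ)`. -/
def fricke (r : ℚ × ℚ) (τ : ℍ) : ℂ :=
  -(2 ^ 7 * 3 ^ 5) * (g2C τ * g3C τ / discC τ) * wpC ((r.1 : ℂ) * τ + (r.2 : ℂ)) τ

/-- The elliptic modular `j`-invariant. -/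
def jinv (τ : ℍ) : ℂ := 1728 * g2C τ ^ 3 / discC τ

/-- The Dedekind eta function. -/
def etaC (τ : ℍ) : ℂ :=
  (Real.sqrt (2 * Real.pi) : ℂ) * Complex.exp (2 * (Real.pi : ℂ) * Complex.I / 16) *
    Complex.exp (2 * (Real.pi : ℂ) * Complex.I * τ / 24) *
    ∏' n : ℕ, (1 - Complex.exp (2 * (Real.pi : ℂ) * Complex.I * ((n : ℂ) + 1) * τ))

/-- `r ∈ ℚ² ∖ ℤ²`. -/
def NonIntegral (r : ℚ × ℚ) : Prop := ¬ ∃ a b : ℤ, r = ((a : ℚ), (b : ℚ))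

/-- `r ∈ (1/N)ℤ²`. -/
def InDen (N : ℕ) (r : ℚ × ℚ) : Prop := ∃ a b : ℤ, r = ((a : ℚ) / N, (b : ℚ) / N)

/-- Membership in `Γ^1(N)`: `a ≡ d ≡ 1` and `b ≡ 0 (mod N)`. -/
def GammaUpper (N : ℕ) (γ : SL(2, ℤ)) : Prop :=
  ((γ 0 0 : ℤ) : ZMod N) = 1 ∧ ((γ 1 1 : ℤ) : ZMod N) = 1 ∧ ((γ 0 1 : ℤ) : ZMod N) = 0

/-- The transpose action `ᵗγ r = (a r₁ + c r₂, b r₁ + d r₂)` of `γ = [[a,b],[c,d]]`. -/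
def tAct (γ : SL(2, ℤ)) (r : ℚ × ℚ) : ℚ × ℚ :=
  ((γ 0 0 : ℚ) * r.1 + (γ 1 0 : ℚ) * r.2, (γ 0 1 : ℚ) * r.1 + (γ 1 1 : ℚ) * r.2)

/-- The power `q^{n/d} = e^{2πi(n/d)τ}`. -/
def qpow (d : ℕ) (n : ℤ) (τ : ℍ) : ℂ :=
  Complex.exp (2 * (Real.pi : ℂ) * Complex.I * ((n : ℂ) / (d : ℂ)) * τ)

/-- `h` is a weakly holomorphic modular function for `Γ₁(N)` with rational
Fourier coefficients: holomorphic on `ℍ`, `Γ₁(N)`-invariant, with a convergent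
`q`-expansion at `i∞` having rational coefficients, and meromorphic at every cusp. -/
def IsWeaklyHolo1 (N : ℕ) (h : ℍ → ℂ) : Prop :=
  MDifferentiable 𝓘(ℂ) 𝓘(ℂ) h ∧
  (∀ γ ∈ Gamma1 N, ∀ τ : ℍ, h (γ • τ) = h τ) ∧
  (∃ n₀ : ℤ, ∃ c : ℕ → ℚ,
    ∀ τ : ℍ, HasSum (fun n : ℕ => (c n : ℂ) * qpow 1 (n₀ + n) τ) (h τ)) ∧
  (∀ γ : SL(2, ℤ), ∃ n₀ : ℤ, ∃ c : ℕ → ℂ,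
    ∀ τ : ℍ, HasSum (fun n : ℕ => c n * qpow N (n₀ + n) τ) (h (γ • τ)))

/-- `h` is a weakly holomorphic modular function for `Γ^1(N)` with rational
Fourier coefficients (the expansion at `i∞` being in powers of `q^{1/N}`). -/
def IsWeaklyHoloUp (N : ℕ) (h : ℍ → ℂ) : Prop :=
  MDifferentiable 𝓘(ℂ) 𝓘(ℂ) h ∧
  (∀ γ : SL(2, ℤ), GammaUpper N γ → ∀ τ : ℍ, h (γ • τ) = h τ) ∧
  (∃ n₀ : ℤ, ∃ c : ℕ → ℚ,
    ∀ τ : ℍ, HasSum (fun n : ℕ => (c n : ℂ) * qpow N (n₀ + n) τ) (h τ)) ∧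
  (∀ γ : SL(2, ℤ), ∃ n₀ : ℤ, ∃ c : ℕ → ℂ,
    ∀ τ : ℍ, HasSum (fun n : ℕ => c n * qpow N (n₀ + n) τ) (h (γ • τ)))

/-- The Weierstrass-unit generator
`f^1_{m,N} = (f_{(1/N,0)} - f_{(1/m,0)})/(f_{(2/m,0)} - f_{(1/m,0)})`. -/
def fUnit (m N : ℕ) (τ : ℍ) : ℂ :=
  (fricke ((1 : ℚ) / N, 0) τ - fricke ((1 : ℚ) / m, 0) τ) /
    (fricke ((2 : ℚ) / m, 0) τ - fricke ((1 : ℚ) / m, 0) τ)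

/-!
Up to a rational factor, `g₂ g₃ / Δ` is `π⁻² E₄ E₆ / Δ`, so up to a rational factor `f_r` is
`(E₄ E₆ / Δ) · (-3 π⁻² ℘(r₁τ + r₂))`. For `r = (k/m, 0)`, sum the series of `℘` along the rows
`lτ + ℤ`: subtracting the rows of `G₂`, which converge on their own, and applying Lipschitz' formula
to the others gives
`-3 π⁻² ℘(kτ/m) = E₂ + 12 ∑_l ∑_{n ≥ 1} n q^{|lm + k| n / m}`.
Every factor is then a rational power series in `q^{1/m}`, except for the simple pole in `q` of
`1 / Δ`: rational power series can be multiplied, and `Δ / q` can be inverted because its leading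
coefficient is nonzero. Holomorphy on `ℍ` follows from the expansion, and invariance under `Γ^1(m)`
from the homogeneity and periodicity of `℘`.
-/

open Function.Periodic (qParam)
open PowerSeries (C X coeff constantCoeff)
open ModularForm (E E₄ E₆ discriminant)
open EisensteinSeries (E2)
open scoped ArithmeticFunction.sigma

/-! ### Expansions in a local parameter at infinity -/

/-- `f` is the sum of the power series `P` in the local parameter `q = e^{2πiτ/h}`. The
coefficients live in an arbitrary `K` mapping to `ℂ`, so that `K = ℚ` expresses rationality of the
expansion. -/
def HasQExpansion {K : Type*} [CommRing K] [Algebra K ℂ] (h : ℝ) (P : PowerSeries K)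
    (f : ℍ → ℂ) : Prop :=
  ∀ τ : ℍ, HasSum (fun n : ℕ => algebraMap K ℂ (coeff n P) * qParam h τ ^ n) (f τ)

theorem qParam_natCast_mul_pow {m : ℕ} (hm : m ≠ 0) (h : ℝ) (z : ℂ) :
    qParam (m * h) z ^ m = qParam h z := by
  rw [qParam, qParam, ← Complex.exp_nat_mul]
  congr 1
  push_cast
  field_simp

namespace HasQExpansion

variable {K : Type*} [CommRing K] [Algebra K ℂ] {h : ℝ} {P R : PowerSeries K} {f g : ℍ → ℂ}

theorem const (a : K) : HasQExpansion h (C a) fun _ => algebraMap K ℂ a := fun τ => by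
  simpa using hasSum_single (f := fun n : ℕ => algebraMap K ℂ (coeff n (C a)) * qParam h τ ^ n) 0
    fun n hn => by simp [PowerSeries.coeff_C, hn]

theorem add (hf : HasQExpansion h P f) (hg : HasQExpansion h R g) :
    HasQExpansion h (P + R) (f + g) := fun τ => by
  simpa [add_mul] using (hf τ).add (hg τ)

theorem sub (hf : HasQExpansion h P f) (hg : HasQExpansion h R g) :
    HasQExpansion h (P - R) (f - g) := fun τ => by
  simpa [sub_mul] using (hf τ).sub (hg τ)

theorem mul (hf : HasQExpansion h P f) (hg : HasQExpansion h R g) :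
    HasQExpansion h (P * R) (f * g) := fun τ => by
  have hP := (hf τ).summable.norm
  have hR := (hg τ).summable.norm
  have cauchy : ∀ n : ℕ, algebraMap K ℂ (coeff n (P * R)) * qParam h τ ^ n =
      ∑ p ∈ Finset.HasAntidiagonal.antidiagonal n,
        (algebraMap K ℂ (coeff p.1 P) * qParam h τ ^ p.1) *
          (algebraMap K ℂ (coeff p.2 R) * qParam h τ ^ p.2) := fun n => by
    rw [PowerSeries.coeff_mul, map_sum, Finset.sum_mul]
    refine Finset.sum_congr rfl fun p hp => ?_
    rw [← Finset.HasAntidiagonal.mem_antidiagonal.mp hp, map_mul, pow_add]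
    ring
  simp only [cauchy, Pi.mul_apply]
  rw [← (hf τ).tsum_eq, ← (hg τ).tsum_eq,
    tsum_mul_tsum_eq_tsum_sum_antidiagonal_of_summable_norm hP hR]
  exact (summable_norm_sum_mul_antidiagonal_of_summable_norm hP hR).of_norm.hasSum

theorem pow (hf : HasQExpansion h P f) : ∀ n : ℕ, HasQExpansion h (P ^ n) (f ^ n)
  | 0 => by simpa using! const (h := h) (1 : K)
  | n + 1 => by simpa only [pow_succ] using (hf.pow n).mul hf

theorem div_qParam (hf : HasQExpansion h (X * P) f) :
    HasQExpansion h P fun τ => f τ / qParam h τ := fun τ => by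
  have hq := Function.Periodic.qParam_ne_zero (h := h) (τ : ℂ)
  have hshift := (hasSum_nat_add_iff' 1).mpr (hf τ)
  simp only [PowerSeries.coeff_succ_X_mul, Finset.sum_range_one, PowerSeries.coeff_zero_X_mul,
    map_zero, zero_mul, sub_zero] at hshift
  refine (hshift.div_const (qParam h τ)).congr_fun fun n => ?_
  rw [pow_succ]
  field_simp

theorem expand {m : ℕ} (hm : m ≠ 0) (hf : HasQExpansion h P f) :
    HasQExpansion (m * h) (PowerSeries.expand m hm P) f := fun τ => by
  have hinj : Function.Injective (m * · : ℕ → ℕ) := mul_right_injective₀ hm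
  rw [← hinj.hasSum_iff fun n hn => by
    rw [PowerSeries.coeff_expand_of_not_dvd _ _ _ fun ⟨j, hj⟩ => hn ⟨j, hj.symm⟩, map_zero,
      zero_mul]]
  simpa only [Function.comp_def, PowerSeries.coeff_expand_mul, pow_mul,
    qParam_natCast_mul_pow hm] using hf τ

theorem of_hasSum_family {ι : Type*} {a : ι → K} {e : ι → ℕ}
    (hfin : ∀ N, {i | e i = N}.Finite)
    (hsum : ∀ τ : ℍ, HasSum (fun i => algebraMap K ℂ (a i) * qParam h τ ^ e i) (f τ)) :
    HasQExpansion h (PowerSeries.mk fun N => ∑ i ∈ (hfin N).toFinset, a i) f := fun τ => by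
  refine ((hsum τ).tsum_fiberwise e).congr_fun fun N => ?_
  have hfib : e ⁻¹' {N} = ↑(hfin N).toFinset := by ext; simp
  rw [hfib, Finset.tsum_subtype' (hfin N).toFinset
    fun i => algebraMap K ℂ (a i) * qParam h τ ^ e i, PowerSeries.coeff_mk, map_sum,
    Finset.sum_mul]
  refine Finset.sum_congr rfl fun i hi => ?_
  rw [(hfin N).mem_toFinset.mp hi]

theorem mdifferentiable (hh : 0 < h) (hf : HasQExpansion h P f) :
    MDifferentiable 𝓘(ℂ) 𝓘(ℂ) f := by
  rw [UpperHalfPlane.mdifferentiable_iff]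
  intro z (hz : 0 < z.im)
  obtain ⟨t, ht0, htz⟩ := exists_between hz
  let U : Set ℂ := {w | t < w.im}
  have hU : IsOpen U := isOpen_lt continuous_const Complex.continuous_im
  let τ₀ : ℍ := ⟨t * Complex.I, by simpa using ht0⟩
  have hbound (n : ℕ) (w : ℂ) (hw : w ∈ U) :
      ‖algebraMap K ℂ (coeff n P) * qParam h w ^ n‖ ≤
        ‖algebraMap K ℂ (coeff n P) * qParam h τ₀ ^ n‖ := by
    have hwτ : ‖qParam h w‖ ≤ ‖qParam h τ₀‖ := by
      have hw' : t < w.im := hw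
      have hτ₀ : (τ₀ : ℂ).im = t := by simp [τ₀]
      simp only [Function.Periodic.norm_qParam, Real.exp_le_exp, neg_mul, neg_div, neg_le_neg_iff,
        hτ₀]
      gcongr
    simp only [norm_mul, norm_pow]
    gcongr
  have hdiff : DifferentiableOn ℂ
      (fun w => ∑' n, algebraMap K ℂ (coeff n P) * qParam h w ^ n) U :=
    differentiableOn_tsum_of_summable_norm (hf τ₀).summable.norm
      (fun n => ((Function.Periodic.differentiable_qParam.pow n).const_mul _).differentiableOn)
      hU hbound
  refine (hdiff.differentiableAt (hU.mem_nhds htz) |>.congr_of_eventuallyEq ?_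
    ).differentiableWithinAt
  filter_upwards [hU.mem_nhds htz] with w hw
  have hw0 : 0 < w.im := ht0.trans hw
  rw [Function.comp_apply, UpperHalfPlane.ofComplex_apply_of_im_pos hw0]
  exact (hf ⟨w, hw0⟩).tsum_eq.symm

theorem mdifferentiable_of_qParam_pow_mul (hh : 0 < h) {N : ℕ}
    (hf : HasQExpansion h P fun τ => qParam h τ ^ N * f τ) : MDifferentiable 𝓘(ℂ) 𝓘(ℂ) f := by
  rw [UpperHalfPlane.mdifferentiable_iff]
  refine ((UpperHalfPlane.mdifferentiable_iff.mp (hf.mdifferentiable hh)).div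
    (Function.Periodic.differentiable_qParam.pow N).differentiableOn
    fun z _ => pow_ne_zero N (Function.Periodic.qParam_ne_zero (h := h) z)).congr fun z hz => ?_
  have hz' : ((ofComplex z : ℍ) : ℂ) = z := by rw [ofComplex_apply_of_im_pos hz]
  simp only [Pi.div_apply, Pi.pow_apply, Function.comp_apply, hz']
  rw [mul_div_cancel_left₀ _ (pow_ne_zero N (Function.Periodic.qParam_ne_zero (h := h) z))]

theorem hasSum_zpow_of_qParam_pow_mul {N : ℕ}
    (hf : HasQExpansion h P fun τ => qParam h τ ^ N * f τ) (τ : ℍ) :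
    HasSum (fun n : ℕ => algebraMap K ℂ (coeff n P) * qParam h τ ^ (-N + n : ℤ)) (f τ) := by
  have hq := Function.Periodic.qParam_ne_zero (h := h) (τ : ℂ)
  have hsum := (hf τ).div_const (qParam h τ ^ N)
  rw [mul_div_cancel_left₀ _ (pow_ne_zero N hq)] at hsum
  refine hsum.congr_fun fun n => ?_
  rw [zpow_add₀ hq, _root_.zpow_neg, zpow_natCast, zpow_natCast]
  ring

theorem periodic (hh : h ≠ 0) (hf : HasQExpansion h P f) :
    Function.Periodic (f ∘ ofComplex) h := fun w => by
  by_cases! hw : 0 < w.im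
  · have hwh : 0 < (w + h).im := by simpa using hw
    have hq : qParam h (w + h) = qParam h w := by
      have hh' : (h : ℂ) ≠ 0 := ofReal_ne_zero.mpr hh
      rw [qParam, mul_add, add_div, mul_div_cancel_right₀ _ hh', exp_add, exp_two_pi_mul_I,
        mul_one, qParam]
    simp only [Function.comp_apply, ofComplex_apply_of_im_pos hw, ofComplex_apply_of_im_pos hwh]
    refine (hf _).unique ?_
    simpa only [hq] using hf ⟨w, hw⟩
  · have hwh : (w + h).im ≤ 0 := by simpa using hw
    simp [ofComplex_apply_of_im_nonpos hw, ofComplex_apply_of_im_nonpos hwh]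

theorem analyticAt_cuspFunction (hh : 0 < h) (hf : HasQExpansion h P f) :
    AnalyticAt ℂ (cuspFunction h f) 0 :=
  analyticAt_cuspFunction_zero hh (hf.periodic hh.ne') (hf.mdifferentiable hh)
    (isBoundedAtImInfty_of_hasSum_qExpansion hh hf)

theorem qExpansion_eq (hh : 0 < h) (hf : HasQExpansion h P f) :
    qExpansion h f = P.map (algebraMap K ℂ) := by
  have hana := hf.analyticAt_cuspFunction hh
  have hseries := (hasFPowerSeriesOnBall_cuspFunction hh hana hf).hasFPowerSeriesAt
    |>.eq_formalMultilinearSeries hana.hasFPowerSeriesAt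
  ext n
  have hn := congrArg (FormalMultilinearSeries.coeff · n) hseries
  simp only [FormalMultilinearSeries.coeff_ofScalars] at hn
  rw [qExpansion_coeff, PowerSeries.coeff_map, hn, div_eq_inv_mul]

theorem tendsto_atImInfty (hh : 0 < h) (hf : HasQExpansion h P f) :
    Filter.Tendsto f atImInfty (nhds (algebraMap K ℂ (constantCoeff P))) := by
  have hana := hf.analyticAt_cuspFunction hh
  have hlim := hana.continuousAt.tendsto.comp (qParam_tendsto_atImInfty hh)
  rw [cuspFunction_apply_zero hh hana (hf.periodic hh.ne'),
    ← qExpansion_coeff_zero hh hana (hf.periodic hh.ne'), hf.qExpansion_eq hh] at hlim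
  simpa only [Function.comp_def, eq_cuspFunction _ hh.ne' (hf.periodic hh.ne'),
    PowerSeries.coeff_map, PowerSeries.coeff_zero_eq_constantCoeff_apply] using hlim

theorem inv (hh : 0 < h) (hf : HasQExpansion h P f) (hPR : P * R = 1) (hf0 : ∀ τ, f τ ≠ 0) :
    HasQExpansion h R f⁻¹ := by
  have hc : algebraMap K ℂ (constantCoeff P) ≠ 0 := fun hc => by
    have := congrArg (algebraMap K ℂ ∘ constantCoeff) hPR
    simp [hc] at this
  have hper : Function.Periodic (f⁻¹ ∘ ofComplex) h := fun w =>
    congrArg Inv.inv (hf.periodic hh.ne' w)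
  have hhol : MDifferentiable 𝓘(ℂ) 𝓘(ℂ) f⁻¹ := by
    rw [UpperHalfPlane.mdifferentiable_iff]
    exact (UpperHalfPlane.mdifferentiable_iff.mp (hf.mdifferentiable hh)).inv fun _ _ => hf0 _
  have hbdd : IsBoundedAtImInfty f⁻¹ := ((hf.tendsto_atImInfty hh).inv₀ hc).isBigO_one ℝ
  have hexp : qExpansion h f⁻¹ = R.map (algebraMap K ℂ) := by
    have hinv : qExpansion h f * qExpansion h f⁻¹ = 1 := by
      rw [← qExpansion_mul (hf.analyticAt_cuspFunction hh)
        (analyticAt_cuspFunction_zero hh hper hhol hbdd), ← qExpansion_one h]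
      exact congrArg _ (funext fun τ => mul_inv_cancel₀ (hf0 τ))
    have hPR' : P.map (algebraMap K ℂ) * R.map (algebraMap K ℂ) = 1 := by
      rw [← map_mul, hPR, map_one]
    rw [hf.qExpansion_eq hh] at hinv
    exact (IsUnit.of_mul_eq_one _ hPR').mul_left_cancel (hinv.trans hPR'.symm)
  intro τ
  simpa [hexp] using hasSum_qExpansion hh hper hhol hbdd τ

end HasQExpansion

/-! ### Level one -/

/-- The rational power series `1 - (2k / B_k) ∑_{n ≥ 1} σ_{k-1}(n) qⁿ` of the normalised Eisenstein
series of weight `k`. -/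
def eisensteinPowerSeries (k : ℕ) : PowerSeries ℚ :=
  PowerSeries.mk fun n => if n = 0 then 1 else -(2 * k / bernoulli k) * σ (k - 1) n

theorem constantCoeff_eisensteinPowerSeries (k : ℕ) :
    constantCoeff (eisensteinPowerSeries k) = 1 := by
  simp [eisensteinPowerSeries, ← PowerSeries.coeff_zero_eq_constantCoeff_apply]

theorem hasQExpansion_E {k : ℕ} (hk : 3 ≤ k) (hk2 : Even k) :
    HasQExpansion 1 (eisensteinPowerSeries k) (E hk) := fun τ => by
  refine (ModularForm.hasSum_qExpansion (E hk) one_pos one_mem_strictPeriods_SL τ).congr_fun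
    fun n => ?_
  rw [EisensteinSeries.E_qExpansion_coeff hk hk2, eisensteinPowerSeries, PowerSeries.coeff_mk]
  split_ifs <;> simp

theorem hasQExpansion_E2 : HasQExpansion 1 (eisensteinPowerSeries 2) E2 := fun τ => by
  refine (EisensteinSeries.hasSum_qExpansion_E2 (z := τ)).congr_fun fun n => ?_
  rw [eisensteinPowerSeries, PowerSeries.coeff_mk]
  split_ifs <;> norm_num [bernoulli_two, qParam]

/-- The rational power series of the modular discriminant, read off from
`1728 Δ = E₄³ - E₆²`. -/
def discriminantPowerSeries : PowerSeries ℚ :=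
  C (1 / 1728) * (eisensteinPowerSeries 4 ^ 3 - eisensteinPowerSeries 6 ^ 2)

theorem hasQExpansion_discriminant : HasQExpansion 1 discriminantPowerSeries discriminant := by
  have hΔ : discriminant =
      (fun _ => algebraMap ℚ ℂ (1 / 1728)) * ((E₄ : ℍ → ℂ) ^ 3 - (E₆ : ℍ → ℂ) ^ 2) := by
    ext τ
    simp [ModularForm.discriminant_eq_E₄_cube_sub_E₆_sq τ, div_eq_inv_mul]
  rw [hΔ]
  exact (HasQExpansion.const _).mul
    (((hasQExpansion_E _ (by decide)).pow 3).sub ((hasQExpansion_E _ (by decide)).pow 2))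

theorem constantCoeff_discriminantPowerSeries : constantCoeff discriminantPowerSeries = 0 := by
  simp [discriminantPowerSeries, constantCoeff_eisensteinPowerSeries]

theorem coeff_one_discriminantPowerSeries : coeff 1 discriminantPowerSeries = 1 := by
  have h := ModularForm.discriminant_qExpansion_coeff_one
  rw [hasQExpansion_discriminant.qExpansion_eq one_pos, PowerSeries.coeff_map] at h
  exact (algebraMap ℚ ℂ).injective (h.trans (map_one _).symm)

theorem exists_hasQExpansion_qParam_div_discriminant :
    ∃ P : PowerSeries ℚ, HasQExpansion 1 P fun τ => qParam 1 τ / discriminant τ := by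
  obtain ⟨R, hR⟩ := PowerSeries.X_dvd_iff.mpr constantCoeff_discriminantPowerSeries
  have hR0 : constantCoeff R ≠ 0 := by
    have h := coeff_one_discriminantPowerSeries
    rw [hR, PowerSeries.coeff_succ_X_mul, PowerSeries.coeff_zero_eq_constantCoeff_apply] at h
    exact h ▸ one_ne_zero
  have hdiv := (hR ▸ hasQExpansion_discriminant).div_qParam
  refine ⟨R⁻¹, ?_⟩
  convert hdiv.inv one_pos (PowerSeries.mul_inv_cancel R hR0) fun τ =>
    div_ne_zero (ModularForm.discriminant_ne_zero τ) (Function.Periodic.qParam_ne_zero _) using 1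
  ext τ
  simp

theorem tsum_ne_eq_tsum {α M : Type*} [AddCommMonoid M] [TopologicalSpace M] {f : α → M} {a : α}
    (ha : f a = 0) : ∑' x : {x // x ≠ a}, f x = ∑' x, f x :=
  tsum_subtype_eq_of_support_subset (s := {x | x ≠ a}) fun _ hx hxa => hx (hxa ▸ ha)

theorem tsum_inv_lat_pow {k : ℕ} (hk : 3 ≤ k) (τ : ℍ) :
    ∑' p : {p : ℤ × ℤ // p ≠ 0}, (lat τ p ^ k)⁻¹ = 2 * riemannZeta k * E hk τ := by
  have hk0 : k ≠ 0 := by lia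
  have hE : E hk τ = 1 / 2 * eisensteinSeries (N := 1) 0 k τ :=
    congrArg (1 / 2 * ·) (EisensteinSeries.eisensteinSeriesSIF_apply 0 k τ)
  have hsum : ∑' p : ℤ × ℤ, (lat τ p ^ k)⁻¹ = ∑' v, EisensteinSeries.eisSummand k v τ := by
    rw [← (finTwoArrowEquiv ℤ).symm.tsum_eq]
    simp [EisensteinSeries.eisSummand, lat]
  rw [tsum_ne_eq_tsum (f := fun p => (lat τ p ^ k)⁻¹) (by simp [lat, hk0]), hsum, hE,
    tsum_eisSummand_eq_riemannZeta_mul_eisensteinSeries hk τ]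
  ring

theorem riemannZeta_six : riemannZeta 6 = (π : ℂ) ^ 6 / 945 := by
  have hB : bernoulli 6 = 1 / 42 := by decide +kernel
  convert riemannZeta_two_mul_nat three_ne_zero using 1
  · norm_num
  · rw [show 2 * 3 = 6 from rfl, hB]
    norm_num [Nat.factorial]
    ring

theorem g2C_eq_E₄ (τ : ℍ) : g2C τ = 4 * π ^ 4 / 3 * E₄ τ := by
  rw [g2C, tsum_inv_lat_pow (k := 4) (by norm_num), Nat.cast_ofNat, riemannZeta_four]
  ring

theorem g3C_eq_E₆ (τ : ℍ) : g3C τ = 8 * π ^ 6 / 27 * E₆ τ := by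
  rw [g3C, tsum_inv_lat_pow (k := 6) (by norm_num), Nat.cast_ofNat, riemannZeta_six]
  ring

theorem discC_eq_discriminant (τ : ℍ) : discC τ = 4096 * π ^ 12 * discriminant τ := by
  rw [discC, g2C_eq_E₄, g3C_eq_E₆, ModularForm.discriminant_eq_E₄_cube_sub_E₆_sq]
  ring

theorem fricke_eq (r : ℚ × ℚ) (τ : ℍ) :
    fricke r τ = E₄ τ * E₆ τ / discriminant τ * (-3 / π ^ 2 * wpC (r.1 * τ + r.2) τ) := by
  rw [fricke, g2C_eq_E₄, g3C_eq_E₆, discC_eq_discriminant]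
  have hπ : (π : ℂ) ≠ 0 := by exact_mod_cast Real.pi_ne_zero
  have hΔ := ModularForm.discriminant_ne_zero τ
  field_simp
  ring

/-! ### The Weierstrass function -/

/-- The period pair `(τ, 1)` generating `L_τ`, through which `wpC` is Mathlib's `℘`. -/
def tauPeriodPair (τ : ℍ) : PeriodPair where
  ω₁ := τ
  ω₂ := 1
  indep := LinearIndependent.pair_iff.mpr fun s t h => by
    have hs : s = 0 := by simpa [τ.im_ne_zero] using congrArg Complex.im h
    exact ⟨hs, by simpa [hs] using h⟩

theorem coe_latticeEquivProd_symm_tauPeriodPair (τ : ℍ) (p : ℤ × ℤ) :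
    ((tauPeriodPair τ).latticeEquivProd.symm p : ℂ) = lat τ p := by
  rw [PeriodPair.latticeEquiv_symm_apply]
  simp [tauPeriodPair, lat]

theorem hasSum_weierstrassP_tauPeriodPair (z : ℂ) (τ : ℍ) :
    HasSum (fun p => ((z - lat τ p) ^ 2)⁻¹ - (lat τ p ^ 2)⁻¹)
      ((tauPeriodPair τ).weierstrassP z) := by
  have h := (tauPeriodPair τ).hasSum_weierstrassP z
  rw [← (tauPeriodPair τ).latticeEquivProd.symm.toEquiv.hasSum_iff] at h
  simpa [Function.comp_def, coe_latticeEquivProd_symm_tauPeriodPair] using h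

theorem wpC_eq_weierstrassP (z : ℂ) (τ : ℍ) : wpC z τ = (tauPeriodPair τ).weierstrassP z := by
  have h := hasSum_weierstrassP_tauPeriodPair z τ
  have hne := tsum_ne_eq_tsum (a := (0 : ℤ × ℤ))
    (f := fun p => if p = 0 then 0 else ((z - lat τ p) ^ 2)⁻¹ - (lat τ p ^ 2)⁻¹) (if_pos rfl)
  rw [← h.tsum_eq, h.summable.tsum_eq_add_tsum_ite 0, ← hne, wpC]
  congr 1
  · simp [lat]
  · exact tsum_congr fun p => (if_neg p.2).symm

theorem hasSum_wpC (z : ℂ) (τ : ℍ) :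
    HasSum (fun p => ((z - lat τ p) ^ 2)⁻¹ - (lat τ p ^ 2)⁻¹) (wpC z τ) :=
  wpC_eq_weierstrassP z τ ▸ hasSum_weierstrassP_tauPeriodPair z τ

theorem wpC_add_lat (z : ℂ) (τ : ℍ) (p : ℤ × ℤ) : wpC (z + lat τ p) τ = wpC z τ := by
  rw [wpC_eq_weierstrassP, wpC_eq_weierstrassP, ← coe_latticeEquivProd_symm_tauPeriodPair,
    PeriodPair.weierstrassP_add_coe]

/-- The Lambert series `∑_i ∑_{n ≥ 1} n q^{|sᵢ| n}` in `q = e^{2πiτ/h}`: by Lipschitz' formula,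
`-4π²` times it is the sum over `i` of the rows `∑_n (sᵢ τ / h + n)⁻²`. -/
def lambertSeries {ι : Type*} (h : ℝ) (s : ι → ℤ) (τ : ℍ) : ℂ :=
  ∑' p : ι × ℕ+, (p.2 : ℂ) * qParam h τ ^ ((s p.1).natAbs * p.2)

section LambertSeries

variable {ι : Type*} {s : ι → ℤ}

theorem summable_mul_pow_natAbs_mul (hs : Function.Injective s) (hs0 : ∀ i, s i ≠ 0) {r : ℝ}
    (hr0 : 0 < r) (hr1 : r < 1) :
    Summable fun p : ι × ℕ+ => (p.2 : ℝ) * r ^ ((s p.1).natAbs * p.2) := by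
  have hint : Summable fun l : ℤ => r ^ l.natAbs :=
    summable_int_iff_summable_nat_and_neg.mpr
      ⟨by simpa using summable_geometric_of_lt_one hr0.le hr1,
        by simpa using summable_geometric_of_lt_one hr0.le hr1⟩
  have hpnat : Summable fun n : ℕ+ => (n : ℝ) * r ^ (n : ℕ) := by
    have h := summable_pow_mul_geometric_of_norm_lt_one 1 (r := r) (by simpa [abs_of_pos hr0])
    simpa [Function.comp_def] using h.comp_injective PNat.coe_injective
  have hprod := ((hint.comp_injective hs).mul_of_nonneg hpnat
    (fun _ => pow_nonneg hr0.le _) fun _ => by positivity).mul_left r⁻¹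
  refine hprod.of_nonneg_of_le (fun _ => by positivity) fun ⟨i, n⟩ => ?_
  -- `(|s| - 1) (n - 1) ≥ 0` decouples the two indices.
  have hexp : (s i).natAbs + n ≤ (s i).natAbs * n + 1 := by
    nlinarith [Int.natAbs_pos.mpr (hs0 i), n.pos]
  calc (n : ℝ) * r ^ ((s i).natAbs * n) = r⁻¹ * (n * r ^ ((s i).natAbs * n + 1)) := by
        rw [pow_succ]
        field_simp
    _ ≤ r⁻¹ * (n * r ^ ((s i).natAbs + n)) := by
        gcongr _ * (_ * ?_)
        exact pow_le_pow_of_le_one hr0.le hr1.le hexp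
    _ = r⁻¹ * (r ^ (s i).natAbs * (n * r ^ (n : ℕ))) := by ring

theorem finite_setOf_natAbs_mul_eq (hs : Function.Injective s) (hs0 : ∀ i, s i ≠ 0) (N : ℕ) :
    {p : ι × ℕ+ | (s p.1).natAbs * p.2 = N}.Finite := by
  refine ((Set.finite_Icc (-N : ℤ) N).preimage hs.injOn |>.prod (Set.finite_Iic N |>.preimage
    PNat.coe_injective.injOn)).subset fun ⟨i, n⟩ (hp : _ * _ = N) => ?_
  have hi : (s i).natAbs ≤ N := hp ▸ Nat.le_mul_of_pos_right _ n.pos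
  have hn : (n : ℕ) ≤ N := hp ▸ Nat.le_mul_of_pos_left _ (Int.natAbs_pos.mpr (hs0 i))
  exact ⟨by simp only [Set.mem_preimage, Set.mem_Icc]; lia, hn⟩

theorem summable_lambertSeries {h : ℝ} (hh : 0 < h) (hs : Function.Injective s)
    (hs0 : ∀ i, s i ≠ 0) (τ : ℍ) :
    Summable fun p : ι × ℕ+ => (p.2 : ℂ) * qParam h τ ^ ((s p.1).natAbs * p.2) := by
  refine Summable.of_norm ?_
  simpa using summable_mul_pow_natAbs_mul hs hs0
    (norm_pos_iff.mpr (Function.Periodic.qParam_ne_zero (h := h) (τ : ℂ)))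
    (Function.Periodic.norm_qParam_lt_one hh τ.im_pos)

theorem exists_hasQExpansion_lambertSeries {h : ℝ} (hh : 0 < h) (hs : Function.Injective s)
    (hs0 : ∀ i, s i ≠ 0) : ∃ P : PowerSeries ℚ, HasQExpansion h P (lambertSeries h s) :=
  ⟨_, HasQExpansion.of_hasSum_family (a := fun p => (p.2 : ℚ)) (finite_setOf_natAbs_mul_eq hs hs0)
    fun τ => by simpa [lambertSeries] using (summable_lambertSeries hh hs hs0 τ).hasSum⟩

end LambertSeries

theorem tsum_inv_add_int_sq {w : ℂ} (hw : 0 < w.im) :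
    ∑' n : ℤ, ((w + n) ^ 2)⁻¹ = -4 * π ^ 2 * ∑' n : ℕ+, (n : ℂ) * qParam 1 w ^ (n : ℕ) := by
  have h := EisensteinSeries.qExpansion_identity_pnat (k := 1) le_rfl ⟨w, hw⟩
  have hconst : (-2 * π * Complex.I) ^ 2 = -4 * (π : ℂ) ^ 2 := by
    linear_combination 4 * (π : ℂ) ^ 2 * Complex.I_sq
  simpa only [one_div, Nat.reduceAdd, hconst, Nat.factorial_one, Nat.cast_one, div_one, pow_one,
    qParam, Complex.ofReal_one] using h

theorem tsum_inv_int_mul_div_add_int_sq {h : ℝ} (hh : 0 < h) {s : ℤ} (hs : s ≠ 0) (τ : ℍ) :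
    ∑' n : ℤ, (((s : ℂ) / h * τ + n) ^ 2)⁻¹ =
      -4 * π ^ 2 * ∑' n : ℕ+, (n : ℂ) * qParam h τ ^ (s.natAbs * n) := by
  wlog hpos : 0 < s generalizing s
  · rw [← Int.natAbs_neg, ← this (neg_ne_zero.mpr hs) (by lia), ← (Equiv.neg ℤ).tsum_eq]
    refine tsum_congr fun n => ?_
    push_cast [Equiv.neg_apply]
    ring
  have him : 0 < (((s / h : ℝ) : ℂ) * τ).im := by
    rw [Complex.im_ofReal_mul]
    have := τ.im_pos
    positivity
  have hq : qParam 1 (((s / h : ℝ) : ℂ) * τ) = qParam h τ ^ s.natAbs := by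
    rw [qParam, qParam, ← Complex.exp_nat_mul, Nat.cast_natAbs, abs_of_pos hpos]
    push_cast
    ring_nf
  simpa only [pow_mul, ← hq, Complex.ofReal_div, Complex.ofReal_intCast]
    using tsum_inv_add_int_sq him

theorem hasSum_rows_wpC (z : ℂ) (τ : ℍ) :
    HasSum (fun l : ℤ => ∑' n : ℤ, ((z + l * τ + n) ^ 2)⁻¹ - EisensteinSeries.e2Summand l τ)
      (wpC z τ) := by
  have h := (Equiv.neg (ℤ × ℤ)).hasSum_iff.mpr (hasSum_wpC z τ)
  refine h.prod_fiberwise fun l => ?_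
  have hrow : Summable fun n : ℤ => ((z + l * τ + n) ^ 2)⁻¹ := by
    simpa [zpow_ofNat] using! EisensteinSeries.linear_right_summable (z + l * τ) 1 (k := 2) le_rfl
  refine (hrow.hasSum.sub (EisensteinSeries.e2Summand_summable l τ).hasSum).congr_fun fun n => ?_
  simp only [Function.comp_apply, Equiv.neg_apply, lat, Prod.fst_neg, Prod.snd_neg, Int.cast_neg,
    EisensteinSeries.eisSummand, Matrix.cons_val_zero, Matrix.cons_val_one, _root_.zpow_neg,
    zpow_ofNat]
  congr 2 <;> ring

theorem injective_mul_add {m : ℕ} (hm : m ≠ 0) (k : ℤ) :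
    Function.Injective fun l : ℤ => l * m + k :=
  (add_left_injective k).comp (mul_left_injective₀ (Int.natCast_ne_zero.mpr hm))

theorem mul_add_ne_zero_of_not_dvd {m k : ℤ} (hk : ¬ m ∣ k) (l : ℤ) : l * m + k ≠ 0 :=
  fun h => hk ⟨-l, by linear_combination h⟩

theorem wpC_eq_lambertSeries_sub_G2 {m : ℕ} (hm : m ≠ 0) {k : ℤ} (hk : ¬ (m : ℤ) ∣ k) (τ : ℍ) :
    wpC (k / m * τ) τ =
      -4 * π ^ 2 * lambertSeries m (fun l : ℤ => l * m + k) τ - EisensteinSeries.G2 τ := by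
  have hm0 : (0 : ℝ) < m := by positivity
  have hrow (l : ℤ) : ∑' n : ℤ, ((k / m * τ + l * τ + n : ℂ) ^ 2)⁻¹ =
      -4 * π ^ 2 * ∑' n : ℕ+, (n : ℂ) * qParam m τ ^ ((l * m + k).natAbs * n) := by
    have hm0' : (m : ℂ) ≠ 0 := Nat.cast_ne_zero.mpr hm
    rw [← tsum_inv_int_mul_div_add_int_sq hm0 (mul_add_ne_zero_of_not_dvd hk l)]
    refine tsum_congr fun n => ?_
    congr 2
    push_cast
    field_simp
    ring
  have hsum := summable_lambertSeries hm0 (injective_mul_add hm k) (mul_add_ne_zero_of_not_dvd hk) τ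
  have hlambert := (hsum.hasSum.prod_fiberwise fun l =>
    (hsum.prod_factor l).hasSum).mul_left (-4 * (π : ℂ) ^ 2)
  have hrows := hasSum_rows_wpC (k / m * τ) τ
  simp only [hrow] at hrows
  -- `G₂` is defined by symmetric partial sums of its rows, but here they converge unconditionally.
  have hG2 : HasSum (fun l => EisensteinSeries.e2Summand l τ)
      (-4 * π ^ 2 * lambertSeries m (fun l : ℤ => l * m + k) τ - wpC (k / m * τ) τ)
      (SummationFilter.symmetricIcc ℤ) := by
    have h := hlambert.sub hrows
    simp only [sub_sub_cancel] at h
    exact h.mono_left SummationFilter.LeAtTop.le_atTop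
  rw [EisensteinSeries.G2, hG2.tsum_eq, sub_sub_cancel]

/-! ### Modular invariance -/

/-- The bijection of `ℤ²` induced by right multiplication with `γ`: it matches the coordinates of a
point of `L_{γτ}` with those of its image in `L_τ` under multiplication by `denom γ τ`. -/
def latEquiv (γ : SL(2, ℤ)) : ℤ × ℤ ≃ ℤ × ℤ where
  toFun p := (p.1 * γ 0 0 + p.2 * γ 1 0, p.1 * γ 0 1 + p.2 * γ 1 1)
  invFun p := (p.1 * γ 1 1 - p.2 * γ 1 0, -p.1 * γ 0 1 + p.2 * γ 0 0)
  left_inv p := by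
    have hdet := γ.2 ▸ Matrix.det_fin_two γ.1
    ext
    · linear_combination -p.1 * hdet
    · linear_combination -p.2 * hdet
  right_inv p := by
    have hdet := γ.2 ▸ Matrix.det_fin_two γ.1
    ext
    · linear_combination -p.1 * hdet
    · linear_combination -p.2 * hdet

theorem coe_smul_mul_denom (γ : SL(2, ℤ)) (τ : ℍ) :
    ((γ • τ : ℍ) : ℂ) * denom γ τ = γ 0 0 * τ + γ 0 1 := by
  rw [ModularGroup.sl_moeb, coe_smul_of_det_pos (by simp), div_mul_cancel₀ _ (denom_ne_zero _ τ)]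
  simp [num]

theorem lat_smul (γ : SL(2, ℤ)) (τ : ℍ) (p : ℤ × ℤ) :
    lat (γ • τ) p = lat τ (latEquiv γ p) / denom γ τ := by
  rw [eq_div_iff (denom_ne_zero _ τ)]
  simp only [lat, latEquiv, Equiv.coe_fn_mk, Int.cast_add, Int.cast_mul]
  linear_combination (p.1 : ℂ) * coe_smul_mul_denom γ τ + p.2 * ModularGroup.denom_apply γ τ

theorem wpC_div_denom_smul (γ : SL(2, ℤ)) (z : ℂ) (τ : ℍ) :
    wpC (z / denom γ τ) (γ • τ) = denom γ τ ^ 2 * wpC z τ := by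
  rw [← (hasSum_wpC z τ).tsum_eq, ← (hasSum_wpC _ (γ • τ)).tsum_eq,
    ← (latEquiv γ).tsum_eq fun p => ((z - lat τ p) ^ 2)⁻¹ - (lat τ p ^ 2)⁻¹, ← tsum_mul_left]
  refine tsum_congr fun p => ?_
  rw [lat_smul, ← sub_div, div_pow, div_pow, inv_div, inv_div]
  ring

theorem fricke_smul (r : ℚ × ℚ) (γ : SL(2, ℤ)) (τ : ℍ) :
    fricke r (γ • τ) = fricke (tAct γ r) τ := by
  have hden : denom γ τ ≠ 0 := denom_ne_zero _ τ
  have harg : (r.1 : ℂ) * (γ • τ : ℍ) + r.2 =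
      ((tAct γ r).1 * τ + (tAct γ r).2) / denom γ τ := by
    rw [eq_div_iff hden]
    simp only [tAct, Rat.cast_add, Rat.cast_mul, Rat.cast_intCast]
    linear_combination (r.1 : ℂ) * coe_smul_mul_denom γ τ + r.2 * ModularGroup.denom_apply γ τ
  have hE₄ : E₄ (γ • τ) = denom γ τ ^ 4 * E₄ τ := by
    exact_mod_cast SlashInvariantForm.slash_action_eqn'' E₄ (MonoidHom.mem_range.mpr ⟨γ, rfl⟩) τ
  have hE₆ : E₆ (γ • τ) = denom γ τ ^ 6 * E₆ τ := by
    exact_mod_cast SlashInvariantForm.slash_action_eqn'' E₆ (MonoidHom.mem_range.mpr ⟨γ, rfl⟩) τ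
  have hΔ : discriminant (γ • τ) = denom γ τ ^ 12 * discriminant τ := by
    simp only [ModularForm.discriminant_eq_E₄_cube_sub_E₆_sq, hE₄, hE₆]
    ring
  rw [fricke_eq, fricke_eq, harg, wpC_div_denom_smul, hE₄, hE₆, hΔ]
  field_simp

theorem fricke_add_intCast (r : ℚ × ℚ) (a b : ℤ) (τ : ℍ) :
    fricke (r + ((a : ℚ), (b : ℚ))) τ = fricke r τ := by
  rw [fricke, fricke, ← wpC_add_lat (r.1 * τ + r.2) τ (a, b)]
  congr 2
  simp only [lat, Prod.fst_add, Prod.snd_add, Rat.cast_add, Rat.cast_intCast]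
  ring

theorem fricke_smul_of_gammaUpper {m : ℕ} (hm : m ≠ 0) (k : ℤ) {γ : SL(2, ℤ)}
    (hγ : GammaUpper m γ) (τ : ℍ) :
    fricke ((k : ℚ) / m, 0) (γ • τ) = fricke ((k : ℚ) / m, 0) τ := by
  obtain ⟨u, hu⟩ : (m : ℤ) ∣ γ 0 0 - 1 := by
    simp [← ZMod.intCast_zmod_eq_zero_iff_dvd, hγ.1]
  obtain ⟨v, hv⟩ : (m : ℤ) ∣ γ 0 1 := (ZMod.intCast_zmod_eq_zero_iff_dvd _ _).mp hγ.2.2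
  have hm' : (m : ℚ) ≠ 0 := Nat.cast_ne_zero.mpr hm
  have hr : tAct γ ((k : ℚ) / m, 0) =
      ((k : ℚ) / m, 0) + (((k * u : ℤ) : ℚ), ((k * v : ℤ) : ℚ)) := by
    have hu' : (γ 0 0 : ℚ) = m * u + 1 := by exact_mod_cast sub_eq_iff_eq_add.mp hu
    ext
    · simp only [tAct, hu', Prod.fst_add, Int.cast_mul, mul_zero, add_zero]
      field_simp
      ring
    · simp only [tAct, hv, Prod.snd_add, Int.cast_mul, Int.cast_natCast, mul_zero, add_zero,
        zero_add]
      field_simp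
  rw [fricke_smul, hr, fricke_add_intCast]

/-! ### Rationality -/

theorem exists_hasQExpansion_wpC {m : ℕ} (hm : m ≠ 0) {k : ℤ} (hk : ¬ (m : ℤ) ∣ k) :
    ∃ P : PowerSeries ℚ, HasQExpansion m P fun τ => -3 / π ^ 2 * wpC (k / m * τ) τ := by
  obtain ⟨P, hP⟩ := exists_hasQExpansion_lambertSeries (h := m) (by positivity)
    (injective_mul_add hm k) (mul_add_ne_zero_of_not_dvd hk)
  have hE2 := hasQExpansion_E2.expand hm
  rw [mul_one] at hE2
  have hwp : (fun τ : ℍ => -3 / π ^ 2 * wpC (k / m * τ) τ) =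
      (fun _ => algebraMap ℚ ℂ 12) * lambertSeries m (fun l : ℤ => l * m + k) + E2 := by
    ext τ
    have hπ : (π : ℂ) ≠ 0 := Complex.ofReal_ne_zero.mpr Real.pi_ne_zero
    simp only [wpC_eq_lambertSeries_sub_G2 hm hk, Pi.add_apply, Pi.mul_apply, E2, Pi.smul_apply,
      smul_eq_mul, riemannZeta_two, map_ofNat]
    field_simp
    ring
  rw [hwp]
  exact ⟨_, ((HasQExpansion.const 12).mul hP).add hE2⟩

theorem exists_hasQExpansion_qParam_pow_mul_fricke {m : ℕ} (hm : m ≠ 0) {k : ℤ}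
    (hk : ¬ (m : ℤ) ∣ k) : ∃ P : PowerSeries ℚ,
      HasQExpansion m P fun τ => qParam m τ ^ m * fricke ((k : ℚ) / m, 0) τ := by
  obtain ⟨P, hP⟩ := exists_hasQExpansion_wpC hm hk
  obtain ⟨R, hR⟩ := exists_hasQExpansion_qParam_div_discriminant
  have hlevelOne := (((hasQExpansion_E (k := 4) (by norm_num) (by decide)).mul
    (hasQExpansion_E (k := 6) (by norm_num) (by decide))).mul hR).expand hm
  rw [mul_one] at hlevelOne
  have hfricke : (fun τ : ℍ => qParam m τ ^ m * fricke ((k : ℚ) / m, 0) τ) =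
      (E₄ : ℍ → ℂ) * (E₆ : ℍ → ℂ) * (fun τ : ℍ => qParam 1 τ / discriminant τ) *
        fun τ : ℍ => -3 / π ^ 2 * wpC (k / m * τ) τ := by
    ext τ
    have hq : qParam m τ ^ m = qParam 1 τ := by simpa using qParam_natCast_mul_pow hm 1 τ
    simp only [fricke_eq, hq, Pi.mul_apply, Rat.cast_div, Rat.cast_intCast, Rat.cast_natCast,
      Rat.cast_zero, add_zero]
    ring
  rw [hfricke]
  exact ⟨_, hlevelOne.mul hP⟩

theorem qpow_eq_qParam_zpow (m : ℕ) (n : ℤ) (τ : ℍ) : qpow m n τ = qParam m τ ^ n := by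
  rw [qpow, qParam, ← Complex.exp_int_mul]
  congr 1
  push_cast
  ring

/-- for `k ∈ ℤ ∖ mℤ`, the Fricke function `f_{(k/m,0)}` is
holomorphic on `ℍ`, invariant under `Γ^1(m)`, and has rational Fourier
coefficients in its `q^{1/m}`-expansion. -/
theorem statement10 (m : ℕ) (hm : 1 < m) (k : ℤ) (hk : ¬ (m : ℤ) ∣ k) :
    MDifferentiable 𝓘(ℂ) 𝓘(ℂ) (fricke ((k : ℚ) / m, 0)) ∧
    (∀ γ : SL(2, ℤ), GammaUpper m γ →
      ∀ τ : ℍ, fricke ((k : ℚ) / m, 0) (γ • τ) = fricke ((k : ℚ) / m, 0) τ) ∧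
    (∃ n₀ : ℤ, ∃ c : ℕ → ℚ, ∀ τ : ℍ,
      HasSum (fun n : ℕ => (c n : ℂ) * qpow m (n₀ + n) τ)
        (fricke ((k : ℚ) / m, 0) τ)) := by
  have hm0 : m ≠ 0 := by lia
  obtain ⟨P, hP⟩ := exists_hasQExpansion_qParam_pow_mul_fricke hm0 hk
  refine ⟨hP.mdifferentiable_of_qParam_pow_mul (by positivity),
    fun _ hγ => fricke_smul_of_gammaUpper hm0 k hγ, -m, fun n => coeff n P, fun τ => ?_⟩
  simpa only [qpow_eq_qParam_zpow, eq_ratCast] using hP.hasSum_zpow_of_qParam_pow_mul τ
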